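/- There exists an ML absolutely continuous Borel probability measure μ on 2^ℕ such that for every θ ∈ (0,1) there is a constant c_θ with K(μ↾n) ≤ n − n^θ + c_θ for all n. -/

import Mathlib

open MeasureTheory Filter

/-- Cantor space: the space of infinite binary sequences. -/
abbrev Cantor : Type := ℕ → Bool

/-- Finite binary strings. -/
abbrev BStr : Type := List Bool

/-- The cylinder set of sequences extending the string `x`. -/
def cyl (x : BStr) : Set Cantor := {Z | ∀ i : Fin x.length, Z i.1 = x.get i}

/-- The string of the first `n` bits of `Z`. -/
def seg (Z : Cantor) (n : ℕ) : BStr := List.ofFn fun i : Fin n => Z i.1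

/-- `lam` is the uniform (fair-coin product) measure: every cylinder `[x]`
has measure `2^{-|x|}`. -/
def IsUniform (lam : Measure Cantor) : Prop :=
  ∀ x : BStr, lam (cyl x) = (2 : ENNReal)⁻¹ ^ x.length

/-- `(G_m)` is a Martin-Löf test with respect to the measure `ρ`:
the sets `G_m` are uniformly effectively open and `ρ (G_m) ≤ 2^{-m}`. -/
def IsMLTest (ρ : Measure Cantor) (G : ℕ → Set Cantor) : Prop :=
  (∃ σ : ℕ → ℕ → BStr, Computable₂ σ ∧ ∀ m, G m = ⋃ i, cyl (σ m i)) ∧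
  ∀ m, ρ (G m) ≤ (2 : ENNReal)⁻¹ ^ m

/-- `μ` is Martin-Löf absolutely continuous in `ρ`: `inf_m μ(G_m) = 0`
for every `ρ`-Martin-Löf test `(G_m)`. -/
def MLAC (μ ρ : Measure Cantor) : Prop :=
  ∀ G : ℕ → Set Cantor, IsMLTest ρ G → ⨅ m, μ (G m) = 0

/-- `Z` is Martin-Löf random with respect to `lam`. -/
def MLRandom (lam : Measure Cantor) (Z : Cantor) : Prop :=
  ∀ G : ℕ → Set Cantor, IsMLTest lam G → Z ∉ ⋂ m, G m

/-- `ρ` is a computable measure: `ρ [x]` is a computable real, uniformly in `x`. -/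
def ComputableMeasure (ρ : Measure Cantor) : Prop :=
  ∃ q : BStr → ℕ → ℚ, Computable₂ q ∧
    ∀ x k, |(q x k : ℝ) - (ρ (cyl x)).toReal| ≤ (2 : ℝ)⁻¹ ^ k

/-- `U` is a universal plain machine. -/
def UniversalPlain (U : BStr →. BStr) : Prop :=
  Partrec U ∧ ∀ M : BStr →. BStr, Partrec M →
    ∃ c : ℕ, ∀ p x, x ∈ M p → ∃ q : BStr, q.length ≤ p.length + c ∧ x ∈ U q

/-- The domain of `M` is an antichain under the prefix relation. -/
def PrefixFreeDom (M : BStr →. BStr) : Prop :=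
  ∀ p q : BStr, (M p).Dom → (M q).Dom → p <+: q → p = q

/-- `U` is a universal prefix-free machine. -/
def UniversalPrefixFree (U : BStr →. BStr) : Prop :=
  Partrec U ∧ PrefixFreeDom U ∧
  ∀ M : BStr →. BStr, Partrec M → PrefixFreeDom M →
    ∃ c : ℕ, ∀ p x, x ∈ M p → ∃ q : BStr, q.length ≤ p.length + c ∧ x ∈ U q

/-- Kolmogorov complexity of the string `x` with respect to the machine `U`:
the minimal length of a `U`-description of `x`. -/
noncomputable def cpx (U : BStr →. BStr) (x : BStr) : ℕ :=
  sInf {n | ∃ q : BStr, q.length = n ∧ x ∈ U q}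

/-- A natural number `n` identified with the string `0^n`. -/
def numStr (n : ℕ) : BStr := List.replicate n false

/-- Complexity of the natural number `n` (i.e., of the string `0^n`). -/
noncomputable def cpxN (U : BStr →. BStr) (n : ℕ) : ℕ := cpx U (numStr n)

/-- The `μ`-average complexity of the strings of length `n`:
`Σ_{|x|=n} cpx(x) · μ[x]`. -/
noncomputable def avgCpx (U : BStr →. BStr) (μ : Measure Cantor) (n : ℕ) : ℝ :=
  ∑ v : Fin n → Bool, (cpx U (List.ofFn v) : ℝ) * (μ (cyl (List.ofFn v))).toReal

/-- A measure `μ` is trivial for the complexity given by the machine `U`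
(e.g. K-trivial when `U` is the universal prefix-free machine, C-trivial
when `U` is the universal plain machine). -/
def MeasTrivial (U : BStr →. BStr) (μ : Measure Cantor) : Prop :=
  ∃ c : ℝ, ∀ n : ℕ, avgCpx U μ n ≤ (cpxN U n : ℝ) + c

/-!
Averages of conditional measures `lam[|[0^N]]` can keep the mass `μ[0^n]` from decaying faster than
any prescribed sequence tending to `0`, while `μ ≪ lam`. Strings of length `n` satisfy
`K(x) ≤ n + O(√n)`, whereas `K(0^n) = O(√n)`, so this mass lowers the average complexity to
`n + O(√n) - n μ[0^n]`. Choosing the decay slow enough absorbs the `O(√n)` together with any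
prescribed `f(n) = o(n)`; the function `f(n) = n / log n` dominates every `n^θ` with `θ < 1`.
-/

open Asymptotics Topology

section PrefixCodes

/-- A prefix code: no codeword is a proper prefix of another, and distinct symbols have distinct
codewords. It is the encoding side of a prefix-free machine. -/
def IsPrefixCode {α β : Type*} (e : α → List β) : Prop :=
  ∀ a b, e a <+: e b → a = b

theorem IsPrefixCode.injective {α β : Type*} {e : α → List β} (he : IsPrefixCode e) :
    e.Injective :=
  fun a b h => he a b (h ▸ List.prefix_rfl)

theorem IsPrefixCode.append_prefix_append {α β : Type*} {e : α → List β} (he : IsPrefixCode e)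
    {a b : α} {s t : List β} (h : e a ++ s <+: e b ++ t) : a = b ∧ s <+: t := by
  obtain rfl : a = b :=
    (List.prefix_or_prefix_of_prefix ((List.prefix_append _ _).trans h)
      (List.prefix_append _ _)).elim (he a b) fun hba => (he b a hba).symm
  exact ⟨rfl, (List.prefix_append_right_inj _).1 h⟩

/-- The unary code `1^n 0`, the building block of `natCode`. -/
def unaryCode (n : ℕ) : BStr := List.replicate n true ++ [false]

/-- A prefix code for natural numbers of length `O(√n)`: the unary codes of the two components of
`Nat.unpair n`, each of which is at most `√n`. -/
def natCode (n : ℕ) : BStr := unaryCode n.unpair.1 ++ unaryCode n.unpair.2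

/-- The self-delimiting form of a string: its length in `natCode`, then the string itself. -/
def selfDelimited (x : BStr) : BStr := natCode x.length ++ x

theorem isPrefixCode_unaryCode : IsPrefixCode unaryCode
  | 0, 0, _ => rfl
  | 0, _ + 1, h => by simp [unaryCode, List.replicate_succ] at h
  | _ + 1, 0, h => by simp [unaryCode, List.replicate_succ] at h
  | a + 1, b + 1, h =>
    congrArg (· + 1) <| isPrefixCode_unaryCode a b <| by
      simpa [unaryCode, List.replicate_succ] using h

theorem isPrefixCode_natCode : IsPrefixCode natCode := fun a b h => by
  obtain ⟨hfst, hrest⟩ := isPrefixCode_unaryCode.append_prefix_append h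
  rw [← Nat.pair_unpair a, ← Nat.pair_unpair b, hfst, isPrefixCode_unaryCode _ _ hrest]

theorem isPrefixCode_selfDelimited : IsPrefixCode selfDelimited := fun _ _ h => by
  obtain ⟨hlength, hrest⟩ := isPrefixCode_natCode.append_prefix_append h
  exact hrest.eq_of_length hlength

theorem natCode_length_le (n : ℕ) : ((natCode n).length : ℝ) ≤ 2 * √n + 2 := by
  have hmax : max n.unpair.1 n.unpair.2 ^ 2 ≤ n :=
    (Nat.le_add_right _ _).trans <|
      (Nat.max_sq_add_min_le_pair n.unpair.1 n.unpair.2).trans_eq (Nat.pair_unpair n)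
  have le_sqrt {m : ℕ} (hm : m ≤ max n.unpair.1 n.unpair.2) : (m : ℝ) ≤ √n :=
    Real.le_sqrt_of_sq_le (mod_cast (Nat.pow_le_pow_left hm 2).trans hmax)
  have hlength : (natCode n).length = n.unpair.1 + n.unpair.2 + 2 := by
    simp only [natCode, unaryCode, List.length_append, List.length_replicate,
      List.length_singleton]
    ring
  rw [hlength]
  push_cast
  linarith [le_sqrt (le_max_left _ _), le_sqrt (le_max_right _ _)]

theorem computable_replicate {α : Type*} [Primcodable α] (a : α) :
    Computable fun n : ℕ => List.replicate n a :=
  ((Primrec.list_map Primrec.list_range (Primrec.const a).to₂).of_eq fun n => by simp).to_comp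

theorem computable_unaryCode : Computable unaryCode :=
  Computable.list_append.comp (computable_replicate true) (Computable.const [false])

theorem computable_natCode : Computable natCode :=
  Computable.list_append.comp
    (computable_unaryCode.comp (Computable.fst.comp Computable.unpair))
    (computable_unaryCode.comp (Computable.snd.comp Computable.unpair))

theorem computable_selfDelimited : Computable selfDelimited :=
  Computable.list_append.comp (computable_natCode.comp Computable.list_length) Computable.id

end PrefixCodes

section DecodingMachine

variable {α : Type*} [Primcodable α] {e out : α → BStr}

/-- The machine that, given a codeword `e a`, searches for `a` and prints `out a`; it diverges on
strings that are not codewords. -/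
def decodingMachine (e out : α → BStr) : BStr →. BStr := fun p =>
  Nat.rfindOpt fun t => (Encodable.decode (α := α) t).bind fun a =>
    bif e a = p then some (out a) else none

theorem partrec_decodingMachine (he : Computable e) (hout : Computable out) :
    Partrec (decodingMachine e out) := by
  refine Partrec.rfindOpt (Computable.option_bind (Computable.decode.comp Computable.snd) ?_)
  exact Computable.cond
    (Primrec.eq.decide.to_comp.comp (he.comp Computable.snd) (Computable.fst.comp Computable.fst))
    (Computable.option_some.comp (hout.comp Computable.snd)) (Computable.const none)

theorem exists_eq_of_mem_decodingMachine {p x : BStr} (hx : x ∈ decodingMachine e out p) :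
    ∃ a, e a = p ∧ out a = x := by
  obtain ⟨t, ht⟩ := Nat.rfindOpt_spec hx
  obtain ⟨a, -, ha⟩ := Option.bind_eq_some_iff.1 ht
  by_cases hp : e a = p
  · exact ⟨a, hp, by simpa [hp] using ha⟩
  · simp [hp] at ha

theorem mem_decodingMachine (he : e.Injective) (a : α) : out a ∈ decodingMachine e out (e a) := by
  have hdom : (decodingMachine e out (e a)).Dom :=
    Nat.rfindOpt_dom.2 ⟨Encodable.encode a, out a, by simp⟩
  obtain ⟨b, hb, hout⟩ := exists_eq_of_mem_decodingMachine (Part.get_mem hdom)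
  rw [he hb] at hout
  exact hout ▸ Part.get_mem hdom

theorem prefixFreeDom_decodingMachine (he : IsPrefixCode e) :
    PrefixFreeDom (decodingMachine e out) := fun p q hp hq hpq => by
  obtain ⟨a, rfl, -⟩ := exists_eq_of_mem_decodingMachine (Part.get_mem hp)
  obtain ⟨b, rfl, -⟩ := exists_eq_of_mem_decodingMachine (Part.get_mem hq)
  rw [he a b hpq]

end DecodingMachine

section ComplexityBounds

/-- `U` simulates every prefix-free machine with constant overhead. Since `U` itself need not be
prefix-free, universal plain machines are included. -/
def OptimalForPrefixFree (U : BStr →. BStr) : Prop :=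
  ∀ M : BStr →. BStr, Partrec M → PrefixFreeDom M →
    ∃ c : ℕ, ∀ p x, x ∈ M p → ∃ q : BStr, q.length ≤ p.length + c ∧ x ∈ U q

variable {U : BStr →. BStr}

theorem cpx_le_length {q x : BStr} (hx : x ∈ U q) : cpx U x ≤ q.length :=
  Nat.sInf_le ⟨q, rfl, hx⟩

namespace OptimalForPrefixFree

theorem exists_cpx_le_length_code {α : Type*} [Primcodable α] {e out : α → BStr}
    (hU : OptimalForPrefixFree U) (he : Computable e) (hcode : IsPrefixCode e)
    (hout : Computable out) : ∃ c : ℕ, ∀ a, cpx U (out a) ≤ (e a).length + c := by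
  obtain ⟨c, hc⟩ := hU (decodingMachine e out) (partrec_decodingMachine he hout)
    (prefixFreeDom_decodingMachine hcode)
  refine ⟨c, fun a => ?_⟩
  obtain ⟨q, hq, hmem⟩ := hc (e a) (out a) (mem_decodingMachine hcode.injective a)
  exact (cpx_le_length hmem).trans hq

theorem exists_cpx_le (hU : OptimalForPrefixFree U) :
    ∃ c : ℝ, ∀ x : BStr, (cpx U x : ℝ) ≤ x.length + 2 * √x.length + c := by
  obtain ⟨c, hc⟩ :=
    hU.exists_cpx_le_length_code computable_selfDelimited isPrefixCode_selfDelimited Computable.id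
  refine ⟨2 + c, fun x => ?_⟩
  have hx : (cpx U x : ℝ) ≤ (natCode x.length).length + x.length + c := by
    exact_mod_cast (hc x).trans_eq (by simp only [selfDelimited, List.length_append])
  linarith [natCode_length_le x.length]

theorem exists_cpx_numStr_le (hU : OptimalForPrefixFree U) :
    ∃ c : ℝ, ∀ n, (cpx U (numStr n) : ℝ) ≤ 2 * √n + c := by
  obtain ⟨c, hc⟩ := hU.exists_cpx_le_length_code computable_natCode isPrefixCode_natCode
    (computable_replicate false)
  refine ⟨2 + c, fun n => ?_⟩
  have hn : (cpx U (numStr n) : ℝ) ≤ (natCode n).length + c := mod_cast hc n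
  linarith [natCode_length_le n]

end OptimalForPrefixFree

end ComplexityBounds

section Cylinders

theorem cyl_ofFn {n : ℕ} (v : Fin n → Bool) :
    cyl (List.ofFn v) = (fun (Z : Cantor) (i : Fin n) => Z i) ⁻¹' {v} := by
  ext Z
  simp [cyl, funext_iff, Fin.forall_iff]

theorem measurableSet_cyl (x : BStr) : MeasurableSet (cyl x) := by
  rw [← List.ofFn_get x, cyl_ofFn]
  exact measurable_pi_lambda _ (fun _ => measurable_pi_apply _) (measurableSet_singleton _)

theorem antitone_cyl_numStr : Antitone fun n => cyl (numStr n) := by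
  intro m n hmn Z hZ
  simp only [cyl, numStr, Set.mem_ofPred_eq, List.get_eq_getElem, List.getElem_replicate,
    Fin.forall_iff, List.length_replicate] at hZ ⊢
  exact fun i hi => hZ i (hi.trans_le hmn)

theorem sum_measureReal_cyl (μ : Measure Cantor) [IsFiniteMeasure μ] (n : ℕ) :
    ∑ v : Fin n → Bool, μ.real (cyl (List.ofFn v)) = μ.real Set.univ := by
  simp only [cyl_ofFn]
  rw [sum_measureReal_preimage_singleton]
  · simp
  · exact fun v _ => cyl_ofFn v ▸ measurableSet_cyl _

end Cylinders

section AverageComplexity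

variable {U : BStr →. BStr} (μ : Measure Cantor) [IsProbabilityMeasure μ]

theorem avgCpx_le_sub {n : ℕ} {B d : ℝ}
    (hB : ∀ v : Fin n → Bool, (cpx U (List.ofFn v) : ℝ) ≤ B) (w : Fin n → Bool)
    (hw : (cpx U (List.ofFn w) : ℝ) ≤ B - d) :
    avgCpx U μ n ≤ B - d * μ.real (cyl (List.ofFn w)) := by
  have hcpx (v : Fin n → Bool) : (cpx U (List.ofFn v) : ℝ) ≤ B - if v = w then d else 0 := by
    split_ifs with hv
    · exact hv ▸ hw
    · simpa using hB v
  calc avgCpx U μ n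
      ≤ ∑ v : Fin n → Bool, (B - if v = w then d else 0) * μ.real (cyl (List.ofFn v)) :=
        Finset.sum_le_sum fun v _ => mul_le_mul_of_nonneg_right (hcpx v) measureReal_nonneg
    _ = B * ∑ v : Fin n → Bool, μ.real (cyl (List.ofFn v)) - d * μ.real (cyl (List.ofFn w)) := by
        simp [sub_mul, ite_mul, Finset.sum_sub_distrib, Finset.mul_sum]
    _ = B - d * μ.real (cyl (List.ofFn w)) := by simp [sum_measureReal_cyl]

theorem OptimalForPrefixFree.exists_avgCpx_le (hU : OptimalForPrefixFree U) :
    ∃ c : ℝ, ∀ n : ℕ, avgCpx U μ n ≤ n + 2 * √n + c - n * μ.real (cyl (numStr n)) := by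
  obtain ⟨c, hc⟩ := hU.exists_cpx_le
  obtain ⟨d, hd⟩ := hU.exists_cpx_numStr_le
  refine ⟨max c d, fun n => ?_⟩
  have hzero : List.ofFn (fun _ : Fin n => false) = numStr n := List.ofFn_const n false
  rw [← hzero]
  refine avgCpx_le_sub μ (fun v => ?_) _ ?_
  · have hv := hc (List.ofFn v)
    rw [List.length_ofFn] at hv
    linarith [le_max_left c d]
  · rw [hzero]
    linarith [hd n, le_max_right c d]

end AverageComplexity

section AbsoluteContinuity

variable {α : Type*} [MeasurableSpace α] {μ ν : Measure α}

theorem tendsto_measure_zero_of_absolutelyContinuous [IsFiniteMeasure μ] (hμ : μ ≪ ν)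
    {s : ℕ → Set α} (hs : ∀ n, MeasurableSet (s n)) (hsum : ∑' n, ν (s n) ≠ ⊤) :
    Tendsto (fun n => μ (s n)) atTop (𝓝 0) := by
  have hev : ∀ᵐ x ∂μ, ∀ᶠ n in atTop, x ∉ s n := hμ.ae_le (ae_eventually_notMem hsum)
  simpa using tendsto_measure_of_ae_tendsto_indicator_of_isFiniteMeasure (μ := μ) atTop
    MeasurableSet.empty hs (by simpa using hev)

theorem MLAC.of_absolutelyContinuous {μ ρ : Measure Cantor} [IsFiniteMeasure μ] (hμ : μ ≪ ρ) :
    MLAC μ ρ := by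
  rintro G ⟨⟨σ, -, hσ⟩, hG⟩
  have hmeas (m : ℕ) : MeasurableSet (G m) :=
    hσ m ▸ MeasurableSet.iUnion fun i => measurableSet_cyl (σ m i)
  have hsum : ∑' m, ρ (G m) ≠ ⊤ :=
    ne_top_of_le_ne_top (by simp [ENNReal.tsum_geometric]) (ENNReal.tsum_le_tsum hG)
  exact le_bot_iff.1 <|
    ge_of_tendsto' (tendsto_measure_zero_of_absolutelyContinuous hμ hmeas hsum) (iInf_le _)

/-- The mixture `∑ₖ 2^{-(k+1)} κₖ` of a sequence of measures. -/
noncomputable def geometricMixture (κ : ℕ → Measure α) : Measure α :=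
  Measure.sum fun k => (2⁻¹ : ENNReal) ^ (k + 1) • κ k

instance (κ : ℕ → Measure α) [∀ k, IsProbabilityMeasure (κ k)] :
    IsProbabilityMeasure (geometricMixture κ) :=
  ⟨by simp [geometricMixture, Measure.sum_apply, ENNReal.tsum_geometric_add_one,
    ENNReal.inv_mul_cancel two_ne_zero ENNReal.ofNat_ne_top]⟩

theorem geometricMixture_absolutelyContinuous {κ : ℕ → Measure α} (hκ : ∀ k, κ k ≪ ν) :
    geometricMixture κ ≪ ν :=
  Measure.absolutelyContinuous_sum_left fun k => (hκ k).smul_left _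

theorem two_inv_pow_le_geometricMixture {κ : ℕ → Measure α} {s : Set α} {K : ℕ}
    (hs : ∀ k ≥ K, κ k s = 1) : (2⁻¹ : ENNReal) ^ K ≤ geometricMixture κ s :=
  calc (2⁻¹ : ENNReal) ^ K
      = ∑' k, 2⁻¹ ^ (k + K + 1) * κ (k + K) s := by
        simp_rw [hs _ (Nat.le_add_left K _), mul_one, add_right_comm _ K 1, pow_add _ _ K,
          ENNReal.tsum_mul_right, ENNReal.tsum_geometric_add_one, ENNReal.one_sub_inv_two, inv_inv,
          ENNReal.inv_mul_cancel two_ne_zero ENNReal.ofNat_ne_top, one_mul]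
    _ ≤ ∑' k, 2⁻¹ ^ (k + 1) * κ k s :=
        ENNReal.tsum_comp_le_tsum_of_injective (add_left_injective K)
          fun k => 2⁻¹ ^ (k + 1) * κ k s
    _ ≤ geometricMixture κ s := Measure.le_sum_apply _ s

theorem exists_strictMono_eventually_le_two_inv_pow {u : ℕ → ℝ} (hu : Tendsto u atTop (𝓝 0)) :
    ∃ N : ℕ → ℕ, StrictMono N ∧ ∀ᶠ n in atTop, ∃ k, n ≤ N k ∧ u n ≤ 2⁻¹ ^ k := by
  obtain ⟨N, hmono, hN⟩ :=
    extraction_forall_of_eventually (P := fun k m => ∀ n ≥ m, u n ≤ 2⁻¹ ^ (k + 1)) fun k =>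
      eventually_forall_ge_atTop.2 (hu.eventually_le_const (by positivity))
  refine ⟨N, hmono, (eventually_gt_atTop (N 0)).mono fun n hn => ?_⟩
  obtain ⟨k, hlow, hup⟩ := Set.mem_iUnion.1 <|
    (iUnion_Ioc_map_succ_eq_Ioi (fun _ => hmono.monotone bot_le)
      hmono.not_bddAbove_range_of_wellFoundedLT).ge hn
  exact ⟨k + 1, hup, hN k n hlow.le⟩

theorem exists_absolutelyContinuous_eventually_le {s : ℕ → Set α} (hanti : Antitone s)
    (hzero : ∀ n, ν (s n) ≠ 0) (htop : ∀ n, ν (s n) ≠ ⊤) {u : ℕ → ℝ}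
    (hu : Tendsto u atTop (𝓝 0)) :
    ∃ μ : Measure α, IsProbabilityMeasure μ ∧ μ ≪ ν ∧ ∀ᶠ n in atTop, u n ≤ μ.real (s n) := by
  obtain ⟨N, hmono, hN⟩ := exists_strictMono_eventually_le_two_inv_pow hu
  let κ (k : ℕ) : Measure α := ProbabilityTheory.cond ν (s (N k))
  have hκ (k : ℕ) : IsProbabilityMeasure (κ k) :=
    ProbabilityTheory.cond_isProbabilityMeasure_of_finite (hzero _) (htop _)
  refine ⟨geometricMixture κ, inferInstance, geometricMixture_absolutelyContinuous fun _ =>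
    ProbabilityTheory.cond_absolutelyContinuous, ?_⟩
  filter_upwards [hN]
  rintro n ⟨K, hnK, hun⟩
  have hone (k : ℕ) (hk : k ≥ K) : κ k (s n) = 1 :=
    prob_le_one.antisymm <|
      calc 1 = κ k (s (N k)) := (ProbabilityTheory.cond_apply_self (hzero _) (htop _)).symm
        _ ≤ κ k (s n) := measure_mono (hanti (hnK.trans (hmono.monotone hk)))
  calc u n ≤ 2⁻¹ ^ K := hun
    _ = ((2⁻¹ : ENNReal) ^ K).toReal := by simp
    _ ≤ (geometricMixture κ).real (s n) :=
        ENNReal.toReal_mono (measure_ne_top _ _) (two_inv_pow_le_geometricMixture hone)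

end AbsoluteContinuity

section Asymptotics

theorem exists_forall_le_add_of_eventually_le {u v : ℕ → ℝ} (h : ∀ᶠ n in atTop, u n ≤ v n) :
    ∃ c : ℝ, ∀ n, u n ≤ v n + c := by
  have hbdd : IsBoundedUnder (· ≤ ·) atTop fun n => u n - v n :=
    ⟨0, eventually_map.2 (h.mono fun _ hn => sub_nonpos.2 hn)⟩
  obtain ⟨c, hc⟩ := hbdd.bddAbove_range
  exact ⟨c, fun n => sub_le_iff_le_add'.1 (hc ⟨n, rfl⟩)⟩

theorem isLittleO_sqrt_id_atTop : Real.sqrt =o[atTop] (id : ℝ → ℝ) := by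
  refine isLittleO_of_tendsto' ((eventually_ne_atTop 0).mono fun x hx h => absurd h hx) ?_
  simpa only [id, Real.sqrt_div_self'] using
    Real.tendsto_sqrt_atTop.const_div_atTop 1

theorem isLittleO_natCast_div_log :
    (fun n : ℕ => (n : ℝ) / Real.log n) =o[atTop] fun n : ℕ => (n : ℝ) := by
  have hlog : Tendsto (fun n : ℕ => (Real.log n)⁻¹) atTop (𝓝 0) :=
    (Real.tendsto_log_atTop.comp tendsto_natCast_atTop_atTop).inv_tendsto_atTop
  simpa only [div_eq_mul_inv, mul_one] using
    (isBigO_refl (fun n : ℕ => (n : ℝ)) atTop).mul_isLittleO ((isLittleO_one_iff ℝ).2 hlog)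

theorem eventually_rpow_le_div_log {θ : ℝ} (hθ : θ < 1) :
    ∀ᶠ x : ℝ in atTop, x ^ θ ≤ x / Real.log x := by
  filter_upwards [(isLittleO_log_rpow_atTop (sub_pos.2 hθ)).bound one_pos,
    eventually_gt_atTop 1] with x hlog hx
  have hx₀ : 0 < x := one_pos.trans hx
  rw [one_mul, Real.norm_of_nonneg (Real.log_pos hx).le,
    Real.norm_of_nonneg (Real.rpow_nonneg hx₀.le _)] at hlog
  rw [le_div_iff₀ (Real.log_pos hx)]
  calc x ^ θ * Real.log x ≤ x ^ θ * x ^ (1 - θ) := by gcongr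
    _ = x := by rw [← Real.rpow_add hx₀, add_sub_cancel, Real.rpow_one]

end Asymptotics

theorem exists_MLAC_measure_with_slow_K_growth_general {lam : Measure Cantor}
    (hzero : ∀ n, lam (cyl (numStr n)) ≠ 0) (htop : ∀ n, lam (cyl (numStr n)) ≠ ⊤) {f : ℕ → ℝ}
    (hf : f =o[atTop] fun n : ℕ => (n : ℝ)) :
    ∃ μ : Measure Cantor, IsProbabilityMeasure μ ∧ μ ≪ lam ∧
      ∀ U : BStr →. BStr, OptimalForPrefixFree U →
        ∃ c : ℝ, ∀ n : ℕ, avgCpx U μ n ≤ n - f n + c := by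
  have hsqrt : (fun n : ℕ => √(n : ℝ)) =o[atTop] fun n : ℕ => (n : ℝ) :=
    isLittleO_sqrt_id_atTop.comp_tendsto tendsto_natCast_atTop_atTop
  have hlim := (hf.add (hsqrt.const_mul_left 2)).tendsto_div_nhds_zero
  obtain ⟨μ, hμ, hac, hle⟩ :=
    exists_absolutelyContinuous_eventually_le antitone_cyl_numStr hzero htop hlim
  refine ⟨μ, hμ, hac, fun U hU => ?_⟩
  obtain ⟨c, hc⟩ := hU.exists_avgCpx_le μ
  have hmass : ∀ᶠ n : ℕ in atTop, f n + 2 * √n ≤ n * μ.real (cyl (numStr n)) := by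
    filter_upwards [hle, eventually_gt_atTop 0] with n hn hpos
    exact (div_le_iff₀' (Nat.cast_pos.2 hpos)).1 hn
  obtain ⟨d, hd⟩ := exists_forall_le_add_of_eventually_le hmass
  exact ⟨c + d, fun n => by linarith [hc n, hd n]⟩

/-- there is an ML absolutely continuous measure `μ` such that
for every `θ ∈ (0,1)` one has `K(μ↾n) ≤ n - n^θ + c_θ` for a constant `c_θ`
and all `n`. -/
theorem exists_MLAC_measure_with_slow_K_growth
    (UK : BStr →. BStr) (hUK : UniversalPrefixFree UK)
    (lam : Measure Cantor) (hlam : IsUniform lam) :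
    ∃ μ : Measure Cantor, IsProbabilityMeasure μ ∧ MLAC μ lam ∧
      ∀ θ : ℝ, 0 < θ → θ < 1 → ∃ cθ : ℝ, ∀ n : ℕ,
        avgCpx UK μ n ≤ (n : ℝ) - (n : ℝ) ^ θ + cθ := by
  obtain ⟨μ, hμ, hac, hbound⟩ := exists_MLAC_measure_with_slow_K_growth_general (lam := lam)
    (fun n => by simp [hlam (numStr n)]) (fun n => by simp [hlam (numStr n)])
    isLittleO_natCast_div_log
  obtain ⟨c, hc⟩ := hbound UK hUK.2.2
  refine ⟨μ, hμ, MLAC.of_absolutelyContinuous hac, fun θ _ hθ => ?_⟩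
  obtain ⟨d, hd⟩ := exists_forall_le_add_of_eventually_le
    (eventually_rpow_le_div_log hθ).natCast_atTop
  exact ⟨c + d, fun n => by linarith [hc n, hd n]⟩
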